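/- ∫_0^{π/2} t²·log(cos t) dt = −(π³/24)·log 2 − (π/4)·ζ(3). -/

import Mathlib

open Real

/-!
On `[0, π/2)` we have `log (2 cos t) = ∑ (-1)ⁿ⁺¹ cos (2nt) / n`, and
`∫ t in 0..π/2, t² cos (2nt) = π (-1)ⁿ / (4n²)`, so integrating termwise against `t²` gives
`∫ t in 0..π/2, t² log (2 cos t) = -(π/4) ζ(3)`. The series converges only conditionally, so the
interchange is done by Abel summation: for `0 ≤ r < 1` the Taylor series of `log (1 + z)` at
`z = r e²ⁱᵗ` has real part `log ‖1 + r e²ⁱᵗ‖` and is dominated by a geometric series, while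
`‖1 + r e²ⁱᵗ‖` lies between `|cos t|` and `2`, so that dominated convergence applies as `r → 1`.
-/

section AbelSummation

open Filter MeasureTheory Topology

theorem hasSum_log_norm_one_add_mul_exp {r : ℝ} (hr : |r| < 1) (θ : ℝ) :
    HasSum (fun n : ℕ ↦ (-1) ^ (n + 1) / n * cos (n * θ) * r ^ n)
      (log ‖1 + r * Complex.exp (θ * Complex.I)‖) := by
  have hz : ‖r * Complex.exp (θ * Complex.I)‖ < 1 := by
    rwa [norm_mul, Complex.norm_exp_ofReal_mul_I, Complex.norm_real, mul_one]
  rw [← Complex.log_re]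
  convert! Complex.hasSum_re (Complex.hasSum_taylorSeries_log hz) using 2 with n
  have hterm : (-1) ^ (n + 1) * (r * Complex.exp (θ * Complex.I)) ^ n / n =
      ((-1) ^ (n + 1) / n * r ^ n : ℝ) * Complex.exp ((n * θ : ℝ) * Complex.I) := by
    rw [mul_pow, ← Complex.exp_nat_mul]
    push_cast
    ring_nf
  rw [hterm, Complex.re_ofReal_mul, Complex.exp_ofReal_mul_I_re]
  ring

theorem norm_one_add_mul_exp_two_mul_sq (r t : ℝ) :
    ‖1 + r * Complex.exp ((2 * t : ℝ) * Complex.I)‖ ^ 2 =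
      ((1 + r) * cos t) ^ 2 + ((1 - r) * sin t) ^ 2 := by
  rw [← Complex.normSq_eq_norm_sq, Complex.normSq_apply]
  simp only [Complex.add_re, Complex.add_im, Complex.one_re, Complex.one_im,
    Complex.re_ofReal_mul, Complex.im_ofReal_mul, Complex.exp_ofReal_mul_I_re,
    Complex.exp_ofReal_mul_I_im, cos_two_mul, sin_two_mul]
  linear_combination (4 * r ^ 2 * cos t ^ 2 - (1 - r) ^ 2) * sin_sq_add_cos_sq t

theorem norm_one_add_exp_two_mul (t : ℝ) :
    ‖1 + Complex.exp ((2 * t : ℝ) * Complex.I)‖ = |2 * cos t| := by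
  have h := norm_one_add_mul_exp_two_mul_sq 1 t
  rw [← abs_norm, ← sq_eq_sq_iff_abs_eq_abs]
  simpa [one_add_one_eq_two] using h

theorem abs_cos_le_norm_one_add_mul_exp {r : ℝ} (hr : 0 ≤ r) (t : ℝ) :
    |cos t| ≤ ‖1 + r * Complex.exp ((2 * t : ℝ) * Complex.I)‖ := by
  rw [← abs_norm, ← sq_le_sq, norm_one_add_mul_exp_two_mul_sq]
  nlinarith [sq_nonneg ((1 - r) * sin t), mul_nonneg hr (sq_nonneg (cos t)),
    sq_nonneg (r * cos t)]

theorem norm_one_add_mul_exp_le {r : ℝ} (hr : |r| ≤ 1) (θ : ℝ) :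
    ‖1 + r * Complex.exp (θ * Complex.I)‖ ≤ 2 := by
  calc ‖1 + r * Complex.exp (θ * Complex.I)‖
      ≤ ‖(1 : ℂ)‖ + ‖r * Complex.exp (θ * Complex.I)‖ := norm_add_le _ _
    _ = 1 + |r| := by
      rw [norm_one, norm_mul, Complex.norm_exp_ofReal_mul_I, Complex.norm_real, mul_one,
        norm_eq_abs]
    _ ≤ 2 := by linarith

-- `Real.log x` is `log |x|`, so the right-hand side is `log 2 - log |cos t|`.
theorem abs_log_norm_one_add_mul_exp_le {r t : ℝ} (hr₀ : 0 ≤ r) (hr₁ : r ≤ 1) (ht : cos t ≠ 0) :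
    |log ‖1 + r * Complex.exp ((2 * t : ℝ) * Complex.I)‖| ≤ log 2 - log (cos t) := by
  have hcos : 0 < |cos t| := abs_pos.mpr ht
  have hlower := log_le_log hcos (abs_cos_le_norm_one_add_mul_exp hr₀ t)
  have hupper := log_le_log (hcos.trans_le (abs_cos_le_norm_one_add_mul_exp hr₀ t))
    (norm_one_add_mul_exp_le ((abs_of_nonneg hr₀).trans_le hr₁) (2 * t))
  have hlog_cos : log |cos t| ≤ 0 := log_nonpos (abs_nonneg _) (abs_cos_le_one t)
  have hlog_two : 0 < log 2 := log_pos one_lt_two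
  rw [log_abs] at hlower hlog_cos
  exact abs_le.mpr ⟨by linarith, by linarith⟩

variable {μ : Measure ℝ} {f : ℝ → ℝ}

theorem hasSum_integral_mul_log_norm_one_add_mul_exp (hf : Integrable f μ) {r : ℝ}
    (hr : |r| < 1) :
    HasSum (fun n : ℕ ↦ ((-1) ^ (n + 1) / n * ∫ t, f t * cos (n * (2 * t)) ∂μ) * r ^ n)
      (∫ t, f t * log ‖1 + r * Complex.exp ((2 * t : ℝ) * Complex.I)‖ ∂μ) := by
  have hcoeff (n : ℕ) : |(-1 : ℝ) ^ (n + 1) / n| ≤ 1 := by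
    rw [abs_div, abs_neg_one_pow, Nat.abs_cast, one_div]
    exact Nat.cast_inv_le_one n
  have hterm (n : ℕ) : ((-1) ^ (n + 1) / n * ∫ t, f t * cos (n * (2 * t)) ∂μ) * r ^ n =
      ∫ t, f t * ((-1) ^ (n + 1) / n * cos (n * (2 * t)) * r ^ n) ∂μ := by
    rw [← integral_const_mul, ← integral_mul_const]
    congr with t
    ring
  simp_rw [hterm]
  refine hasSum_integral_of_dominated_convergence (fun n t ↦ |f t| * |r| ^ n)
    (fun n ↦ hf.aestronglyMeasurable.mul (by fun_prop)) (fun n ↦ .of_forall fun t ↦ ?_)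
    (.of_forall fun t ↦ (summable_geometric_of_lt_one (abs_nonneg r) hr).mul_left _)
    ?_ (.of_forall fun t ↦ (hasSum_log_norm_one_add_mul_exp hr (2 * t)).mul_left _)
  · rw [norm_eq_abs, abs_mul, abs_mul, abs_mul, abs_pow]
    gcongr
    exact mul_le_of_le_one_left (by positivity)
      (mul_le_one₀ (hcoeff n) (abs_nonneg _) (abs_cos_le_one _))
  · simp_rw [tsum_mul_left]
    exact hf.abs.mul_const _

theorem tendsto_log_norm_one_add_mul_exp {t : ℝ} (ht : cos t ≠ 0) :
    Tendsto (fun r : ℝ ↦ log ‖1 + r * Complex.exp ((2 * t : ℝ) * Complex.I)‖) (𝓝 1)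
      (𝓝 (log (2 * cos t))) := by
  have hnorm : ‖1 + ((1 : ℝ) : ℂ) * Complex.exp ((2 * t : ℝ) * Complex.I)‖ = |2 * cos t| := by
    rw [Complex.ofReal_one, one_mul, norm_one_add_exp_two_mul]
  have hcont : ContinuousAt
      (fun r : ℝ ↦ log ‖1 + r * Complex.exp ((2 * t : ℝ) * Complex.I)‖) 1 :=
    ContinuousAt.log (by fun_prop) (by rw [hnorm]; positivity)
  rw [← log_abs, ← hnorm]
  exact hcont.tendsto

theorem tendsto_integral_mul_log_norm_one_add_mul_exp (hf : Integrable f μ)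
    (hf_log : Integrable (fun t ↦ f t * log (cos t)) μ) (hcos : ∀ᵐ t ∂μ, cos t ≠ 0) :
    Tendsto (fun r : ℝ ↦ ∫ t, f t * log ‖1 + r * Complex.exp ((2 * t : ℝ) * Complex.I)‖ ∂μ)
      (𝓝[<] 1) (𝓝 (∫ t, f t * log (2 * cos t) ∂μ)) := by
  have hbound : Integrable (fun t ↦ |f t| * (log 2 - log (cos t))) μ := by
    refine ((hf.abs.mul_const (log 2)).add hf_log.abs).congr (.of_forall fun t ↦ ?_)
    have hlog : log (cos t) ≤ 0 := by
      rw [← log_abs]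
      exact log_nonpos (abs_nonneg _) (abs_cos_le_one t)
    simp only [Pi.add_apply, abs_mul, abs_of_nonpos hlog]
    ring
  refine tendsto_integral_filter_of_dominated_convergence _ (.of_forall fun r ↦ ?_) ?_ hbound ?_
  · exact hf.aestronglyMeasurable.mul (Measurable.aestronglyMeasurable (by fun_prop))
  · filter_upwards [Ioo_mem_nhdsLT zero_lt_one] with r hr
    filter_upwards [hcos] with t ht
    rw [norm_mul, norm_eq_abs, norm_eq_abs]
    gcongr
    exact abs_log_norm_one_add_mul_exp_le hr.1.le hr.2.le ht
  · filter_upwards [hcos] with t ht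
    exact ((tendsto_log_norm_one_add_mul_exp ht).mono_left nhdsWithin_le_nhds).const_mul _

theorem integral_mul_log_two_mul_cos_eq_of_tendsto (hf : Integrable f μ)
    (hf_log : Integrable (fun t ↦ f t * log (cos t)) μ) (hcos : ∀ᵐ t ∂μ, cos t ≠ 0) {l : ℝ}
    (hl : Tendsto (fun N ↦ ∑ n ∈ Finset.range N,
      (-1) ^ (n + 1) / n * ∫ t, f t * cos (n * (2 * t)) ∂μ) atTop (𝓝 l)) :
    ∫ t, f t * log (2 * cos t) ∂μ = l := by
  refine tendsto_nhds_unique (tendsto_integral_mul_log_norm_one_add_mul_exp hf hf_log hcos)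
    ((tendsto_tsum_powerSeries_nhdsWithin_lt hl).congr' ?_)
  filter_upwards [Ioo_mem_nhdsLT (show (-1 : ℝ) < 1 by norm_num)] with r hr
  exact (hasSum_integral_mul_log_norm_one_add_mul_exp hf (abs_lt.mpr hr)).tsum_eq

theorem integral_mul_log_two_mul_cos {a b : ℝ} (hf : IntervalIntegrable f μ a b)
    (hf_log : IntervalIntegrable (fun t ↦ f t * log (cos t)) μ a b)
    (hcos : ∀ᵐ t ∂μ, cos t ≠ 0) :
    ∫ t in a..b, f t * log (2 * cos t) ∂μ =
      (∫ t in a..b, f t ∂μ) * log 2 + ∫ t in a..b, f t * log (cos t) ∂μ := by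
  have hlog : ∀ᵐ t ∂μ, t ∈ Set.uIoc a b →
      f t * log (2 * cos t) = f t * log 2 + f t * log (cos t) := by
    filter_upwards [hcos] with t ht _
    rw [log_mul two_ne_zero ht, mul_add]
  rw [intervalIntegral.integral_congr_ae hlog,
    intervalIntegral.integral_add (hf.mul_const _) hf_log, intervalIntegral.integral_mul_const]

theorem ae_cos_ne_zero : ∀ᵐ t : ℝ, cos t ≠ 0 := by
  have h : cos ⁻¹' {0}ᶜ ∈ codiscrete ℝ :=
    analyticOnNhd_cos.preimage_zero_mem_codiscrete (x := 0) (by simp)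
  have hae := ae_restrict_le_codiscreteWithin (μ := volume) MeasurableSet.univ h
  rwa [Measure.restrict_univ] at hae

end AbelSummation

theorem hasDerivAt_sq_mul_cos_primitive {c : ℝ} (hc : c ≠ 0) (t : ℝ) :
    HasDerivAt (fun t ↦ t ^ 2 * sin (c * t) / c + 2 * t * cos (c * t) / c ^ 2
      - 2 * sin (c * t) / c ^ 3) (t ^ 2 * cos (c * t)) t := by
  have hlin : HasDerivAt (fun t ↦ c * t) c t := hasDerivAt_const_mul c
  have hderiv := ((((hasDerivAt_pow 2 t).mul hlin.sin).div_const c).add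
    (((hasDerivAt_const_mul 2).mul hlin.cos).div_const (c ^ 2))).sub
    ((hlin.sin.const_mul 2).div_const (c ^ 3))
  refine hderiv.congr_deriv ?_
  field_simp
  ring

theorem integral_sq_mul_cos_mul {c : ℝ} (hc : c ≠ 0) (a b : ℝ) :
    ∫ t in a..b, t ^ 2 * cos (c * t) =
      (b ^ 2 * sin (c * b) / c + 2 * b * cos (c * b) / c ^ 2 - 2 * sin (c * b) / c ^ 3) -
      (a ^ 2 * sin (c * a) / c + 2 * a * cos (c * a) / c ^ 2 - 2 * sin (c * a) / c ^ 3) :=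
  intervalIntegral.integral_eq_sub_of_hasDerivAt
    (fun t _ ↦ hasDerivAt_sq_mul_cos_primitive hc t)
    (Continuous.intervalIntegrable (by fun_prop) _ _)

theorem integral_sq_mul_cos_nat_mul_two_mul {n : ℕ} (hn : n ≠ 0) :
    ∫ t in (0 : ℝ)..(π / 2), t ^ 2 * cos (n * (2 * t)) = π * (-1) ^ n / (4 * n ^ 2) := by
  have hn' : (n : ℝ) ≠ 0 := Nat.cast_ne_zero.mpr hn
  have hend : (n * 2 : ℝ) * (π / 2) = n * π := by ring
  simp_rw [← mul_assoc (n : ℝ) 2]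
  rw [integral_sq_mul_cos_mul (mul_ne_zero hn' two_ne_zero), hend, sin_nat_mul_pi,
    cos_nat_mul_pi]
  simp only [mul_zero, sin_zero]
  field_simp
  ring

theorem intervalIntegrable_sq_mul_log_cos (a b : ℝ) :
    IntervalIntegrable (fun t ↦ t ^ 2 * log (cos t)) MeasureTheory.volume a b :=
  intervalIntegrable_log_cos.continuousOn_mul (by fun_prop)

theorem integral_sq_mul_log_two_mul_cos :
    ∫ t in (0 : ℝ)..(π / 2), t ^ 2 * log (2 * cos t) =
      -(π / 4) * ∑' k : ℕ, 1 / ((k : ℝ) + 1) ^ 3 := by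
  have hzeta : Summable fun n : ℕ ↦ 1 / (n : ℝ) ^ 3 :=
    summable_one_div_nat_pow.mpr (by norm_num)
  have hshift : ∑' n : ℕ, 1 / (n : ℝ) ^ 3 = ∑' k : ℕ, 1 / ((k : ℝ) + 1) ^ 3 := by
    rw [hzeta.tsum_eq_zero_add]
    simp only [Nat.cast_zero, ne_eq, OfNat.ofNat_ne_zero, not_false_eq_true, zero_pow, div_zero,
      zero_add, Nat.cast_add, Nat.cast_one]
  have hcoeff (n : ℕ) : (-1) ^ (n + 1) / n * ∫ t in (0 : ℝ)..(π / 2), t ^ 2 * cos (n * (2 * t)) =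
      -(π / 4) * (1 / (n : ℝ) ^ 3) := by
    rcases eq_or_ne n 0 with rfl | hn
    · simp
    · have hsign : (-1 : ℝ) ^ n * (-1) ^ n = 1 := by rw [← mul_pow]; simp
      have hn' : (n : ℝ) ≠ 0 := Nat.cast_ne_zero.mpr hn
      rw [integral_sq_mul_cos_nat_mul_two_mul hn, pow_succ]
      field_simp
      linear_combination -hsign
  have hπ : (0 : ℝ) ≤ π / 2 := by positivity
  have hsq : IntervalIntegrable (fun t : ℝ ↦ t ^ 2) MeasureTheory.volume 0 (π / 2) :=
    (continuous_pow 2).intervalIntegrable _ _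
  rw [← hshift, intervalIntegral.integral_of_le hπ]
  refine integral_mul_log_two_mul_cos_eq_of_tendsto hsq.1
    (intervalIntegrable_sq_mul_log_cos 0 (π / 2)).1
    (MeasureTheory.ae_restrict_of_ae ae_cos_ne_zero) ?_
  simp_rw [← intervalIntegral.integral_of_le hπ, hcoeff]
  exact (hzeta.hasSum.mul_left _).tendsto_sum_nat

theorem stmt13 :
    (∫ t in (0:ℝ)..(π/2), t^2 * Real.log (Real.cos t)) =
      -(π^3/24) * Real.log 2 - (π/4) * ∑' k : ℕ, 1 / ((k:ℝ)+1)^3 := by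
  have hsplit := integral_mul_log_two_mul_cos ((continuous_pow 2).intervalIntegrable 0 (π / 2))
    (intervalIntegrable_sq_mul_log_cos 0 (π / 2)) ae_cos_ne_zero
  rw [integral_sq_mul_log_two_mul_cos, integral_pow] at hsplit
  push_cast at hsplit
  linear_combination -hsplit
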